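/- Let l ≥ 3 and let β ∈ R^{l−1} be an admissible function of z₁,…,z_{l−1}. Then Tℰβ is an admissible function in R^l; that is, Tℰβ is (4,…,4)-regular in the l variables z₁,…,z_l, homogeneous of degree −2l, and all its components of negative degree and of degree 1 (with respect to every partition and weights d_i = 2) vanish. -/

import Mathlib

open scoped Classical

noncomputable section

namespace Griess

open MvPolynomial

variable {k : Type} [Field k]

/-- The field `k(z₁,…,z_l)` of rational functions over `k` in `l` variables. -/
abbrev RF (k : Type) [Field k] (l : ℕ) : Type := FractionRing (MvPolynomial (Fin l) k)

/-- The variable `zᵢ` as an element of the rational function field. -/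
def zv {k : Type} [Field k] {l : ℕ} (i : Fin l) : RF k l :=
  algebraMap (MvPolynomial (Fin l) k) (RF k l) (MvPolynomial.X i)

/-- The space `Φ^l` of rational functions of the form
`p(z₁,…,z_l) · ∏_{i<j} (zᵢ - z_j)^{k_{ij}}`. -/
def Phi (k : Type) [Field k] (l : ℕ) : Set (RF k l) :=
  { x | ∃ (p : MvPolynomial (Fin l) k) (e : Fin l → Fin l → ℤ),
      x = algebraMap (MvPolynomial (Fin l) k) (RF k l) p *
        ∏ i : Fin l, ∏ j : Fin l, (if i < j then (zv i - zv j) ^ e i j else 1) }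

/-- `D` is the family of partial derivative operators `∂_{z₁},…,∂_{z_l}`:
a family of `k`-linear derivations with `D i (z j) = δ_{ij}`. -/
def IsPartialDeriv {l : ℕ} (D : Fin l → Derivation k (RF k l) (RF k l)) : Prop :=
  ∀ i j : Fin l, D i (zv j) = if j = i then 1 else 0

/-- The operator `Δ = Σᵢ ∂_{zᵢ}`. -/
def Delta {l : ℕ} (D : Fin l → Derivation k (RF k l) (RF k l)) (α : RF k l) : RF k l :=
  ∑ i, D i α

/-- The operator `Δ*(n₁,…,n_l) = Σᵢ (zᵢ² ∂_{zᵢ} + nᵢ zᵢ)`. -/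
def DeltaStar {l : ℕ} (D : Fin l → Derivation k (RF k l) (RF k l)) (n : Fin l → ℤ)
    (α : RF k l) : RF k l :=
  ∑ i, ((zv i) ^ 2 * D i α + (n i : RF k l) * zv i * α)

section Subst

variable {l : ℕ}

/-- The embedding of polynomials in `z₁,…,z_l` into rational functions of
`z₁,…,z_l` and one extra variable `t` (`= RatFunc.X`). -/
def toRatFuncHom (k : Type) [Field k] (l : ℕ) :
    Polynomial (MvPolynomial (Fin l) k) →+* RatFunc (RF k l) :=
  (algebraMap (Polynomial (RF k l)) (RatFunc (RF k l))).comp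
    (Polynomial.mapRingHom (algebraMap (MvPolynomial (Fin l) k) (RF k l)))

lemma toRatFuncHom_injective : Function.Injective (toRatFuncHom k l) := by
  have h1 : Function.Injective (algebraMap (Polynomial (RF k l)) (RatFunc (RF k l))) :=
    IsFractionRing.injective _ _
  have h2 : Function.Injective
      (Polynomial.mapRingHom (algebraMap (MvPolynomial (Fin l) k) (RF k l))) :=
    Polynomial.map_injective _ (IsFractionRing.injective _ _)
  exact fun a b hab => h2 (h1 hab)

/-- Polynomial level substitution `z_j ↦ t·z_j` for `j ∈ J`. -/
def scaleAux (k : Type) [Field k] (l : ℕ) (J : Finset (Fin l)) :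
    MvPolynomial (Fin l) k →+* Polynomial (MvPolynomial (Fin l) k) :=
  (MvPolynomial.aeval (R := k) fun i =>
    if i ∈ J then Polynomial.X * Polynomial.C (MvPolynomial.X i)
    else Polynomial.C (MvPolynomial.X i)).toRingHom

lemma scaleAux_injective (J : Finset (Fin l)) :
    Function.Injective (scaleAux k l J) := by
  have h : (Polynomial.evalRingHom (1 : MvPolynomial (Fin l) k)).comp (scaleAux k l J)
      = RingHom.id _ := by
    apply MvPolynomial.ringHom_ext
    · intro r; simp [scaleAux]
    · intro i; by_cases hi : i ∈ J <;> simp [scaleAux, hi]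
  intro p q hpq
  have hp := DFunLike.congr_fun h p
  have hq := DFunLike.congr_fun h q
  simp only [RingHom.comp_apply, RingHom.id_apply] at hp hq
  rw [← hp, ← hq, hpq]

/-- The substitution `z_j ↦ t·z_j` (for `j ∈ J`), as a map from rational functions
in `z₁,…,z_l` to rational functions in `z₁,…,z_l` and `t`.  Reading off the
coefficients of the Laurent expansion in `t` at `t = 0` of `scaleJ J α` yields the
decomposition of `α` into its homogeneous components with respect to the total degree
in the variables `{z_j : j ∈ J}`, i.e. the expansion of `α` in the domain where the
variables of `J` are much smaller than the remaining variables. -/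
def scaleJ (J : Finset (Fin l)) : RF k l →+* RatFunc (RF k l) :=
  IsFractionRing.lift (g := (toRatFuncHom k l).comp (scaleAux k l J))
    (fun a b hab => scaleAux_injective J (toRatFuncHom_injective hab))

/-- Polynomial level substitution `z_i ↦ z_j + t`. -/
def subPairAux (k : Type) [Field k] (l : ℕ) (i j : Fin l) :
    MvPolynomial (Fin l) k →+* Polynomial (MvPolynomial (Fin l) k) :=
  (MvPolynomial.aeval (R := k) fun s =>
    if s = i then Polynomial.X + Polynomial.C (MvPolynomial.X j)
    else Polynomial.C (MvPolynomial.X s)).toRingHom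

lemma subPairAux_injective (i j : Fin l) :
    Function.Injective (subPairAux k l i j) := by
  have h : (Polynomial.evalRingHom (MvPolynomial.X i - MvPolynomial.X j)).comp
      (subPairAux k l i j) = RingHom.id _ := by
    apply MvPolynomial.ringHom_ext
    · intro r; simp [subPairAux]
    · intro s; by_cases hs : s = i <;> simp [subPairAux, hs]
  intro p q hpq
  have hp := DFunLike.congr_fun h p
  have hq := DFunLike.congr_fun h q
  simp only [RingHom.comp_apply, RingHom.id_apply] at hp hq
  rw [← hp, ← hq, hpq]

/-- The substitution `z_i ↦ z_j + t`, as a map from rational functions in `z₁,…,z_l`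
to rational functions in the variables `z₁,…,z_l` and `t`.  Reading off the Laurent
coefficients in `t` at `t = 0` yields the expansion of a rational function in powers
of `z_i - z_j`, with coefficients not involving `z_i`. -/
def subPair (i j : Fin l) : RF k l →+* RatFunc (RF k l) :=
  IsFractionRing.lift (g := (toRatFuncHom k l).comp (subPairAux k l i j))
    (fun a b hab => subPairAux_injective i j (toRatFuncHom_injective hab))

end Subst

/-- The coefficient of `tᵐ` in the Laurent expansion at `t = 0` of a rational
function of `t`. -/
def lcoeff {L : Type} [Field L] (m : ℤ) (f : RatFunc L) : L :=
  (f : LaurentSeries L).coeff m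

/-- The component `(α)_n` of `α` of degree `n` with respect to the partition
`{1,…,l} = Jᶜ ⊔ J` and the weights `d`:  the part of the expansion of `α` in the
domain where the variables of `J` are much smaller than those of `Jᶜ` whose total
degree in the variables `{z_j : j ∈ J}` equals `n - Σ_{j∈J} d_j`. -/
def component {l : ℕ} (J : Finset (Fin l)) (d : Fin l → ℤ) (n : ℤ) (α : RF k l) :
    RF k l :=
  lcoeff (n - ∑ j ∈ J, d j) (scaleJ J α)

/-- `α` is homogeneous of total degree `d` in the variables `{z_i : i ∈ S}`:
substituting `z_i ↦ t·z_i` for `i ∈ S` multiplies `α` by `t^d`. -/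
def IsHomogeneousOn {l : ℕ} (S : Finset (Fin l)) (d : ℤ) (α : RF k l) : Prop :=
  scaleJ S α = RatFunc.X ^ d * RatFunc.C α

/-- `ρ^{(m)}_{ij} α`: the coefficient of `(z_i - z_j)^m` in the expansion of `α`
in powers of `z_i - z_j` (the coefficients do not involve `z_i`). -/
def rho {l : ℕ} (i j : Fin l) (m : ℤ) (α : RF k l) : RF k l :=
  lcoeff m (subPair i j α)

/-- `α` is a rational function of the variables `{z_i : i ∈ S}` only. -/
def dependsOnlyOn {l : ℕ} (S : Finset (Fin l)) (α : RF k l) : Prop :=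
  α ∈ Subfield.closure (Set.range (algebraMap k (RF k l)) ∪ {x | ∃ i ∈ S, x = zv i})

/-- `α` is an admissible function of the variables `{z_i : i ∈ S}` (the space
`R^{|S|}`):  `α ∈ Φ` is a rational function of the variables of `S` only, it is
`(4,…,4)`-regular and homogeneous of degree `-2|S|` in these variables, and all its
components of negative degree, as well as those of degree `1`, vanish (with respect
to every partition of `S` and all weights equal to `2`). -/
def Admissible {l : ℕ} (D : Fin l → Derivation k (RF k l) (RF k l)) (S : Finset (Fin l))
    (α : RF k l) : Prop :=
  α ∈ Phi k l ∧ dependsOnlyOn S α ∧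
    (∑ i ∈ S, ((zv i) ^ 2 * D i α + 4 * zv i * α)) = 0 ∧
    IsHomogeneousOn S (-(2 * (S.card : ℤ))) α ∧
    ∀ J ⊆ S, ∀ n : ℤ, (n < 0 ∨ n = 1) → component J (fun _ => 2) n α = 0

/-- `α` is an indecomposable admissible function of the variables `{z_i : i ∈ S}`
(the space `R₀^{|S|}`): admissible, and all the components `(α)₀` with respect to
partitions of `S` into two nonempty parts vanish. -/
def AdmissibleInd {l : ℕ} (D : Fin l → Derivation k (RF k l) (RF k l))
    (S : Finset (Fin l)) (α : RF k l) : Prop :=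
  Admissible D S α ∧
    ∀ J ⊆ S, J ≠ ∅ → J ≠ S → component J (fun _ => 2) 0 α = 0

section Shift

variable {l : ℕ}

/-- Polynomial level substitution `z_s ↦ z_s - z_t` for `s ∈ S`. -/
def shiftAuxP (k : Type) [Field k] (l : ℕ) (S : Finset (Fin l)) (t : Fin l) :
    MvPolynomial (Fin l) k →+* MvPolynomial (Fin l) k :=
  (MvPolynomial.aeval (R := k) fun s =>
    if s ∈ S then MvPolynomial.X s - MvPolynomial.X t else MvPolynomial.X s).toRingHom

lemma shiftAuxP_injective (S : Finset (Fin l)) (t : Fin l) (ht : t ∉ S) :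
    Function.Injective (shiftAuxP k l S t) := by
  have h : ((MvPolynomial.aeval (R := k) fun s =>
      if s ∈ S then MvPolynomial.X s + MvPolynomial.X t
      else MvPolynomial.X s).toRingHom).comp (shiftAuxP k l S t) = RingHom.id _ := by
    apply MvPolynomial.ringHom_ext
    · intro r; simp [shiftAuxP]
    · intro s
      by_cases hs : s ∈ S
      · have hst : s ≠ t := fun hst => ht (hst ▸ hs)
        simp [shiftAuxP, hs, ht]
      · simp [shiftAuxP, hs]
  intro p q hpq
  have hp := DFunLike.congr_fun h p
  have hq := DFunLike.congr_fun h q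
  simp only [RingHom.comp_apply, RingHom.id_apply] at hp hq
  rw [← hp, ← hq, hpq]

/-- The shift operator substituting `z_s - z_t` for `z_s`, for all `s ∈ S`. -/
def shiftT (S : Finset (Fin l)) (t : Fin l) (ht : t ∉ S) : RF k l →+* RF k l :=
  IsFractionRing.lift
    (g := (algebraMap (MvPolynomial (Fin l) k) (RF k l)).comp (shiftAuxP k l S t))
    (fun a b hab =>
      shiftAuxP_injective S t ht (IsFractionRing.injective _ _ hab))

/-- The operator `ℰ = Σ_{s ∈ S} (-z_s⁻¹ ∂_{z_s} + 2 z_s⁻²)`. -/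
def curlyE {l : ℕ} (D : Fin l → Derivation k (RF k l) (RF k l)) (S : Finset (Fin l))
    (β : RF k l) : RF k l :=
  ∑ s ∈ S, (-((zv s)⁻¹ * D s β) + 2 * (zv s) ^ (-2 : ℤ) * β)

end Shift

end Griess

namespace Griess

/-!
On `Φ` the operators `Δ = Σ ∂ᵢ`, the Euler operator and `Δ*` form an `sl₂`-triple, and an admissible
`β` is a primitive vector of weight zero in it. As `Δ` is locally nilpotent on `Φ`, this forces
`Δβ = 0`: `β` is translation invariant. Hence `Tβ = β` and, with `t` the new variable,
`Tℰβ = Σ_s α_s` where `α_s = -(z_s - z_t)⁻¹ ∂_s β + 2 (z_s - z_t)⁻² β`.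

Regularity: `Δ* α_s = 3 ∂_s β`, and these sum to `3 Δβ = 0`.

Components: rescaling the variables in `J` by a formal variable `X`, they vanish in negative degrees
and in degree `1` exactly when the resulting generating series lies in `K + X² K[[X]]`. If `t ∈ J`,
the weight of `t` contributes a factor `X²`, which absorbs every pole of an `α_s`. If `t ∉ J`, the
only obstructions are the coefficients of `X⁻¹` and `X` in the geometric series of `(z_t - X z_s)⁻¹`
for `s ∈ J`. By `Δβ = 0` and by the regularity of `β`, their sums over `J` are the negatives of sums
over the indices outside `J`, which lie in `K + X² K[[X]]`.
-/

section LaurentSeries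

open scoped LaurentSeries
open HahnSeries (C single)

/-- The `R`-algebra structure on `K⸨X⸩` acting on coefficients, made to take precedence over
`HahnSeries.powerSeriesAlgebra`. -/
local instance laurentAlgebra {R K : Type*} [CommSemiring R] [Semiring K] [Algebra R K] :
    Algebra R K⸨X⸩ :=
  HahnSeries.instAlgebra

section CommRing

variable {R K : Type*} [CommRing R] [CommRing K] [Algebra R K]

/-- The additive map `d + c·X∂_X` underlying `laurentDerivation`. -/
def laurentDerivationAux (d : Derivation R K K) (c : K) (x : K⸨X⸩) : K⸨X⸩ where
  coeff n := d (x.coeff n) + n * c * x.coeff n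
  isPWO_support' := x.isPWO_support.mono fun n hn hxn => hn (by simp [hxn])

lemma coeff_laurentDerivationAux (d : Derivation R K K) (c : K) (x : K⸨X⸩) (n : ℤ) :
    (laurentDerivationAux d c x).coeff n = d (x.coeff n) + n * c * x.coeff n := rfl

lemma laurentDerivationAux_mul (d : Derivation R K K) (c : K) (x y : K⸨X⸩) :
    laurentDerivationAux d c (x * y) =
      x * laurentDerivationAux d c y + y * laurentDerivationAux d c x := by
  have support_subset (x : K⸨X⸩) : (laurentDerivationAux d c x).support ⊆ x.support :=
    fun n hn hxn => hn (by simp [coeff_laurentDerivationAux, hxn])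
  ext n
  rw [mul_comm y, HahnSeries.coeff_add, HahnSeries.coeff_mul_right' y.isPWO_support
    (support_subset y), HahnSeries.coeff_mul_left' x.isPWO_support (support_subset x)]
  simp only [coeff_laurentDerivationAux, HahnSeries.coeff_mul, map_sum, Finset.mul_sum,
    ← Finset.sum_add_distrib]
  refine Finset.sum_congr rfl fun ij hij => ?_
  rw [← (Finset.mem_antidiagonal.mp hij).2.2, Derivation.leibniz]
  push_cast
  simp only [smul_eq_mul]
  ring

lemma laurentDerivationAux_single (d : Derivation R K K) (c : K) (n : ℤ) (a : K) :
    laurentDerivationAux d c (single n a) = single n (d a + n * c * a) := by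
  ext m
  by_cases hm : m = n <;> simp [coeff_laurentDerivationAux, hm]

/-- The derivation `d + c·X∂_X` of `K⸨X⸩`: it extends the derivation `d` of the coefficients and
multiplies `X` by the constant `c`. -/
def laurentDerivation (d : Derivation R K K) (c : K) : Derivation R K⸨X⸩ K⸨X⸩ where
  toFun := laurentDerivationAux d c
  map_add' x y := by
    ext n
    simp only [coeff_laurentDerivationAux, HahnSeries.coeff_add, map_add]
    ring
  map_smul' r x := by
    ext n
    simp [coeff_laurentDerivationAux]
  map_one_eq_zero' := by
    simpa using laurentDerivationAux_single d c 0 1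
  leibniz' := laurentDerivationAux_mul d c

lemma coeff_laurentDerivation (d : Derivation R K K) (c : K) (x : K⸨X⸩) (n : ℤ) :
    (laurentDerivation d c x).coeff n = d (x.coeff n) + n * c * x.coeff n := rfl

lemma laurentDerivation_single (d : Derivation R K K) (c : K) (n : ℤ) (a : K) :
    laurentDerivation d c (single n a) = single n (d a + n * c * a) :=
  laurentDerivationAux_single d c n a

variable (K) in
/-- The ring `K[[X², X³]] = K + X²K[[X]]` of formal functions on the cusp. Membership of a
generating series says that the components of negative degree and of degree `1` vanish. -/
def cuspSubring : Subring K⸨X⸩ where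
  carrier := {x | ∀ n : ℤ, (n < 0 ∨ n = 1) → x.coeff n = 0}
  zero_mem' _ _ := rfl
  one_mem' n hn := by simp [HahnSeries.coeff_one, show n ≠ 0 by omega]
  add_mem' hx hy n hn := by simp [hx n hn, hy n hn]
  neg_mem' hx n hn := by simp [hx n hn]
  mul_mem' {x y} hx hy n hn := by
    rw [HahnSeries.coeff_mul]
    refine Finset.sum_eq_zero fun ij hij => ?_
    obtain ⟨hi, hj, hij⟩ := Finset.mem_antidiagonal.mp hij
    have hi' : ¬(ij.1 < 0 ∨ ij.1 = 1) := fun h => hi (hx _ h)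
    have hj' : ¬(ij.2 < 0 ∨ ij.2 = 1) := fun h => hj (hy _ h)
    omega

lemma C_mem_cuspSubring (a : K) : C a ∈ cuspSubring K := fun n hn => by
  simp [HahnSeries.C_apply, show n ≠ 0 by omega]

lemma laurentDerivation_mem_cuspSubring (d : Derivation R K K) (c : K) {x : K⸨X⸩}
    (hx : x ∈ cuspSubring K) : laurentDerivation d c x ∈ cuspSubring K := fun n hn => by
  simp [coeff_laurentDerivation, hx n hn]

lemma cuspSubring_le_powerSeries : cuspSubring K ≤ (HahnSeries.ofPowerSeries ℤ K).range := by
  intro x hx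
  refine ⟨PowerSeries.mk fun n => x.coeff n, ?_⟩
  ext n
  rcases lt_or_ge n 0 with h | h
  · rw [hx n (Or.inl h), PowerSeries.coeff_coe, if_pos h]
  · rw [PowerSeries.coeff_coe, if_neg (not_lt.mpr h), PowerSeries.coeff_mk, Int.natAbs_of_nonneg h]

lemma X_sq_mul_mem_cuspSubring {x : K⸨X⸩} (hx : x ∈ (HahnSeries.ofPowerSeries ℤ K).range) :
    single 1 1 ^ 2 * x ∈ cuspSubring K := by
  obtain ⟨p, rfl⟩ := hx
  intro n hn
  rw [HahnSeries.single_pow, one_pow, HahnSeries.coeff_single_mul, PowerSeries.coeff_coe,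
    if_pos (by simp only [nsmul_eq_mul]; omega), mul_zero]

end CommRing

section Field

variable {K : Type*} [Field K]

lemma inv_C_sub_X_mul_C_mem_powerSeries {a : K} (ha : a ≠ 0) (b : K) :
    (C a - single 1 1 * C b)⁻¹ ∈ (HahnSeries.ofPowerSeries ℤ K).range := by
  let p : PowerSeries K := PowerSeries.C a - PowerSeries.X * PowerSeries.C b
  have hp : PowerSeries.constantCoeff p ≠ 0 := by simpa [p] using ha
  refine ⟨p⁻¹, eq_inv_of_mul_eq_one_right ?_⟩
  rw [← map_one (HahnSeries.ofPowerSeries ℤ K), ← PowerSeries.mul_inv_cancel p hp, map_mul]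
  simp [p, HahnSeries.ofPowerSeries_C, HahnSeries.ofPowerSeries_X]

lemma inv_X_mul_C_sub_C_mem_powerSeries {a : K} (ha : a ≠ 0) (b : K) :
    (single 1 1 * C b - C a)⁻¹ ∈ (HahnSeries.ofPowerSeries ℤ K).range := by
  rw [← neg_sub, ← neg_inv]
  exact neg_mem (inv_C_sub_X_mul_C_mem_powerSeries ha b)

lemma geometric_expansion {a b t : K} (ha : a ≠ 0) (ht : t ≠ 0) (hab : a - t * b ≠ 0) (x y : K) :
    (a - t * b)⁻¹ * (t⁻¹ * x) + 2 * (a - t * b)⁻¹ ^ 2 * y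
      - (a⁻¹ * (t⁻¹ * x) + a⁻¹ ^ 3 * (t * (b ^ 2 * x + 4 * b * y))) =
    a⁻¹ ^ 2 * (b * x + 2 * y) + t ^ 2 * (a⁻¹ ^ 3 * b ^ 3 * x * (a - t * b)⁻¹
      + 2 * a⁻¹ ^ 2 * b ^ 2 * y * (2 * a⁻¹ * (a - t * b)⁻¹ + (a - t * b)⁻¹ ^ 2)) := by
  have ha' := mul_inv_cancel₀ ha
  have ht' := mul_inv_cancel₀ ht
  have hv := mul_inv_cancel₀ hab
  generalize (a - t * b)⁻¹ = v at *
  generalize a⁻¹ = c at *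
  have hv₁ : v = c + t * b * c * v := by linear_combination c * hv - v * ha'
  have hv₃ : v = c + t * b * c ^ 2 + t ^ 2 * b ^ 2 * c ^ 3 + t ^ 3 * (b ^ 3 * c ^ 3 * v) := by
    linear_combination (1 + t * b * c + t ^ 2 * b ^ 2 * c ^ 2) * hv₁
  have hv_sq : v ^ 2 = c ^ 2 + 2 * t * b * c ^ 3
      + t ^ 2 * (2 * b ^ 2 * c ^ 3 * v + b ^ 2 * c ^ 2 * v ^ 2) := by
    linear_combination (v + c + t * b * c * v + 2 * t * b * c ^ 2) * hv₁
  linear_combination t⁻¹ * x * hv₃ + 2 * y * hv_sq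
    + x * (b * c ^ 2 + t * b ^ 2 * c ^ 3 + t ^ 2 * b ^ 3 * c ^ 3 * v) * ht'

/-- The subtracted terms collect the contributions to the coefficients of `X⁻¹` and `X` when
`(a - bX)⁻¹` is expanded as a geometric series. -/
lemma geometric_expansion_mem_cuspSubring {a : K} (ha : a ≠ 0) (b : K) {x y : K⸨X⸩}
    (hx : x ∈ cuspSubring K) (hy : y ∈ cuspSubring K) :
    (C a - single 1 1 * C b)⁻¹ * ((single 1 1)⁻¹ * x) + 2 * (C a - single 1 1 * C b)⁻¹ ^ 2 * y
      - (C a⁻¹ * ((single 1 1)⁻¹ * x)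
        + C a⁻¹ ^ 3 * (single 1 1 * (C b ^ 2 * x + 4 * C b * y))) ∈ cuspSubring K := by
  have hX : (single 1 1 : K⸨X⸩) ≠ 0 := by simp
  have hCa : (C a : K⸨X⸩) ≠ 0 := by simpa using ha
  have hCab : C a - single 1 1 * C b ≠ (0 : K⸨X⸩) := fun h => by
    simpa [ha, HahnSeries.C_apply] using congrArg (fun z => z.coeff 0) h
  have ha_mem := C_mem_cuspSubring a⁻¹
  have hb_mem := C_mem_cuspSubring b
  have two_mem : (2 : K⸨X⸩) ∈ cuspSubring K := ofNat_mem _ 2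
  have ha_mem' := cuspSubring_le_powerSeries ha_mem
  have hb_mem' := cuspSubring_le_powerSeries hb_mem
  have two_mem' := cuspSubring_le_powerSeries two_mem
  have hx_mem' := cuspSubring_le_powerSeries hx
  have hy_mem' := cuspSubring_le_powerSeries hy
  have hv_mem' := inv_C_sub_X_mul_C_mem_powerSeries ha b
  rw [map_inv₀] at ha_mem ha_mem' ⊢
  rw [geometric_expansion hCa hX hCab]
  refine add_mem ?_ (X_sq_mul_mem_cuspSubring ?_)
  all_goals repeat' first | assumption | apply pow_mem | apply add_mem | apply mul_mem

end Field

end LaurentSeries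

section Derivations

variable {k F L : Type*} [CommRing k] [Field F] [Algebra k F] [CommRing L] [Algebra k L]

lemma mul_map_derivation_eq_of_mem_closure (φ : F →ₐ[k] L) (d : Derivation k F F)
    (δ : Derivation k L L) (w : L) {s : Set F} (hs : ∀ x ∈ s, w * φ (d x) = δ (φ x)) {x : F}
    (hx : x ∈ Subfield.closure (Set.range (algebraMap k F) ∪ s)) : w * φ (d x) = δ (φ x) := by
  induction hx using Subfield.closure_induction with
  | mem x hx =>
    rcases hx with ⟨c, rfl⟩ | hx
    · simp
    · exact hs x hx
  | one => simp
  | add x y _ _ hx hy => simp only [map_add, mul_add, hx, hy]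
  | neg x _ hx => simp only [map_neg, mul_neg, hx]
  | inv x _ hx =>
    rcases eq_or_ne x 0 with rfl | hx0
    · simp
    have inv_mul : φ x⁻¹ * φ x = 1 := by rw [← map_mul, inv_mul_cancel₀ hx0, map_one]
    rw [Derivation.leibniz_inv, smul_eq_mul, map_mul, mul_left_comm, hx, map_neg, map_pow,
      δ.leibniz_of_mul_eq_one inv_mul, smul_eq_mul]
  | mul x y _ _ hx hy =>
    simp only [Derivation.leibniz, smul_eq_mul, map_add, map_mul, ← hx, ← hy]
    ring

lemma derivation_mem_closure (d : Derivation k F F) {s : Set F}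
    (hs : ∀ x ∈ s, d x ∈ Subfield.closure (Set.range (algebraMap k F) ∪ s)) {x : F}
    (hx : x ∈ Subfield.closure (Set.range (algebraMap k F) ∪ s)) :
    d x ∈ Subfield.closure (Set.range (algebraMap k F) ∪ s) := by
  induction hx using Subfield.closure_induction with
  | mem x hx =>
    rcases hx with ⟨c, rfl⟩ | hx
    · simp
    · exact hs x hx
  | one => simp
  | add x y _ _ hx hy => simpa using add_mem hx hy
  | neg x _ hx => simpa using hx
  | inv x hx' hx =>
    rw [Derivation.leibniz_inv]
    exact mul_mem (neg_mem (pow_mem (inv_mem hx') 2)) hx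
  | mul x y hx' hy' hx hy =>
    rw [Derivation.leibniz]
    exact add_mem (mul_mem hx' hy) (mul_mem hy' hx)

lemma derivation_algebraMap_mvPolynomial {R A σ : Type*} [CommRing R] [CommRing A] [Algebra R A]
    [Algebra (MvPolynomial σ R) A] [IsScalarTower R (MvPolynomial σ R) A]
    (d : Derivation R A A) (d' : Derivation R (MvPolynomial σ R) (MvPolynomial σ R))
    (h : ∀ i, d (algebraMap (MvPolynomial σ R) A (.X i)) = algebraMap _ A (d' (.X i)))
    (p : MvPolynomial σ R) :
    d (algebraMap _ A p) = algebraMap _ A (d' p) := by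
  have := MvPolynomial.derivation_ext (D₁ := d.compAlgebraMap (MvPolynomial σ R))
    (D₂ := (Algebra.linearMap (MvPolynomial σ R) A).compDer d') h
  exact DFunLike.congr_fun this p

end Derivations

section RationalFunctions

variable {k : Type} [Field k] {l : ℕ} {S : Finset (Fin l)}

lemma zv_injective : Function.Injective (zv : Fin l → RF k l) :=
  (IsFractionRing.injective _ _).comp (MvPolynomial.X_injective)

lemma zv_ne_zero (i : Fin l) : (zv i : RF k l) ≠ 0 :=
  (map_ne_zero_iff _ (IsFractionRing.injective _ _)).mpr (MvPolynomial.X_ne_zero i)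

lemma dependsOnlyOn_zv {i : Fin l} (hi : i ∈ S) : dependsOnlyOn S (zv i : RF k l) :=
  Subfield.subset_closure (Or.inr ⟨i, hi, rfl⟩)

lemma dependsOnlyOn.mono {S' : Finset (Fin l)} (h : S ⊆ S') {x : RF k l}
    (hx : dependsOnlyOn S x) : dependsOnlyOn S' x :=
  Subfield.closure_mono (Set.union_subset_union_right _ fun x (hx : ∃ i ∈ S, x = zv i) =>
    hx.imp fun _ => And.imp_left fun hi => h hi) hx

lemma dependsOnlyOn_univ (x : RF k l) : dependsOnlyOn Finset.univ x := by
  have algebraMap_mem (p : MvPolynomial (Fin l) k) :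
      dependsOnlyOn Finset.univ (algebraMap _ (RF k l) p) := by
    induction p using MvPolynomial.induction_on with
    | C c => exact Subfield.subset_closure (Or.inl ⟨c, rfl⟩)
    | add p q hp hq => rw [map_add]; exact add_mem hp hq
    | mul_X p i hp => rw [map_mul]; exact mul_mem hp (dependsOnlyOn_zv (Finset.mem_univ i))
  obtain ⟨a, b, -, rfl⟩ := IsFractionRing.div_surjective (A := MvPolynomial (Fin l) k) x
  exact div_mem (algebraMap_mem a) (algebraMap_mem b)

lemma dependsOnlyOn.mul_map_derivation_eq {L : Type*} [CommRing L] [Algebra k L]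
    (φ : RF k l →ₐ[k] L) (d : Derivation k (RF k l) (RF k l)) (δ : Derivation k L L) (w : L)
    (h : ∀ i ∈ S, w * φ (d (zv i)) = δ (φ (zv i))) {x : RF k l} (hx : dependsOnlyOn S x) :
    w * φ (d x) = δ (φ x) :=
  mul_map_derivation_eq_of_mem_closure φ d δ w (by rintro _ ⟨i, hi, rfl⟩; exact h i hi) hx

lemma dependsOnlyOn.derivation_eq {d e : Derivation k (RF k l) (RF k l)}
    (h : ∀ i ∈ S, d (zv i) = e (zv i)) {x : RF k l} (hx : dependsOnlyOn S x) : d x = e x := by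
  simpa using hx.mul_map_derivation_eq (AlgHom.id k (RF k l)) d e 1 (by simpa using h)

lemma derivation_ext_zv {d e : Derivation k (RF k l) (RF k l)} (h : ∀ i, d (zv i) = e (zv i)) :
    d = e :=
  Derivation.ext fun x => (dependsOnlyOn_univ x).derivation_eq fun i _ => h i

lemma dependsOnlyOn.exists_supported {x : RF k l} (hx : dependsOnlyOn S x) :
    ∃ a ∈ MvPolynomial.supported k (S : Set (Fin l)),
      ∃ b ∈ MvPolynomial.supported k (S : Set (Fin l)),
        algebraMap _ (RF k l) a / algebraMap _ (RF k l) b = x := by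
  have closure_le : Subring.closure (Set.range (algebraMap k (RF k l)) ∪ {x | ∃ i ∈ S, x = zv i}) ≤
      (MvPolynomial.supported k (S : Set (Fin l))).toSubring.map (algebraMap _ (RF k l)) := by
    refine Subring.closure_le.mpr (Set.union_subset ?_ ?_)
    · rintro _ ⟨c, rfl⟩
      exact ⟨MvPolynomial.C c, Subalgebra.algebraMap_mem _ c, rfl⟩
    · rintro _ ⟨i, hi, rfl⟩
      exact ⟨MvPolynomial.X i, Algebra.subset_adjoin ⟨i, hi, rfl⟩, rfl⟩
  obtain ⟨y, hy, z, hz, rfl⟩ := Subfield.mem_closure_iff.mp hx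
  obtain ⟨a, ha, rfl⟩ := closure_le hy
  obtain ⟨b, hb, rfl⟩ := closure_le hz
  exact ⟨a, ha, b, hb, rfl⟩

section PartialDerivatives

variable {D : Fin l → Derivation k (RF k l) (RF k l)} (hD : IsPartialDeriv D)
include hD

lemma dependsOnlyOn.partialDeriv (s : Fin l) {x : RF k l} (hx : dependsOnlyOn S x) :
    dependsOnlyOn S (D s x) := by
  refine derivation_mem_closure (D s) ?_ hx
  rintro _ ⟨i, -, rfl⟩
  rw [hD]
  split_ifs
  exacts [one_mem _, zero_mem _]

lemma partialDeriv_eq_zero_of_dependsOnlyOn {i : Fin l} (hi : i ∉ S) {x : RF k l}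
    (hx : dependsOnlyOn S x) : D i x = 0 :=
  hx.derivation_eq (e := 0) fun j hj => by
    rw [hD, if_neg (ne_of_mem_of_not_mem hj hi), Derivation.zero_apply]

end PartialDerivatives

end RationalFunctions

section Translation

variable {R σ : Type*} [CommRing R]

variable (R σ) in
/-- The derivation `Δ = ∑ᵢ ∂ᵢ` of `R[zᵢ : i ∈ σ]`, encoded by its values `Δ zᵢ = 1` so that `σ` may
be infinite. -/
def sumPDeriv : Derivation R (MvPolynomial σ R) (MvPolynomial σ R) :=
  MvPolynomial.mkDerivation R fun _ => 1

lemma sumPDeriv_X (i : σ) : sumPDeriv R σ (.X i) = 1 := MvPolynomial.mkDerivation_X ..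

variable (R σ) in
/-- The simultaneous translation `zᵢ ↦ zᵢ + t` of all the variables by a new variable `t`, i.e. the
flow of `sumPDeriv`. -/
def translate : MvPolynomial σ R →ₐ[R] Polynomial (MvPolynomial σ R) :=
  MvPolynomial.aeval fun i => .C (.X i) + .X

lemma translate_X (i : σ) : translate R σ (.X i) = .C (.X i) + .X := MvPolynomial.aeval_X ..

lemma eval_zero_translate (p : MvPolynomial σ R) : (translate R σ p).eval 0 = p := by
  have : ((Polynomial.aeval 0).restrictScalars R).comp (translate R σ) = AlgHom.id R _ := by
    ext i
    simp [translate_X]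
  simpa using DFunLike.congr_fun this p

lemma derivative_translate (p : MvPolynomial σ R) :
    Polynomial.derivative (translate R σ p) = translate R σ (sumPDeriv R σ p) := by
  induction p using MvPolynomial.induction_on with
  | C c => simp [translate]
  | add p q hp hq => simp only [map_add, hp, hq]
  | mul_X p i hp =>
    simp only [Derivation.leibniz, map_mul, map_add, smul_eq_mul, Polynomial.derivative_mul, hp,
      translate_X, sumPDeriv_X, Polynomial.derivative_C, Polynomial.derivative_X, map_one]
    ring

lemma sumPDeriv_eq_zero_of_translate_eq {p : MvPolynomial σ R}
    (hp : translate R σ p = Polynomial.C p) : sumPDeriv R σ p = 0 := by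
  rw [← eval_zero_translate (sumPDeriv R σ p), ← derivative_translate, hp, Polynomial.derivative_C,
    Polynomial.eval_zero]

lemma translate_eq_of_sumPDeriv_eq_zero [IsDomain R] [CharZero R] {p : MvPolynomial σ R}
    (hp : sumPDeriv R σ p = 0) : translate R σ p = Polynomial.C p := by
  have derivative_eq_zero : Polynomial.derivative (translate R σ p) = 0 := by
    rw [derivative_translate, hp, map_zero]
  have := Polynomial.eq_C_of_natDegree_eq_zero
    (Polynomial.derivative_eq_zero.mp derivative_eq_zero)
  rw [this, Polynomial.coeff_zero_eq_eval_zero, eval_zero_translate]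

lemma exists_iterate_sumPDeriv_eq_zero (p : MvPolynomial σ R) :
    ∃ r, (sumPDeriv R σ)^[r] p = 0 := by
  have iterate_translate (r : ℕ) (q : MvPolynomial σ R) :
      translate R σ ((sumPDeriv R σ)^[r] q) = Polynomial.derivative^[r] (translate R σ q) :=
    (Function.Semiconj.iterate_right (fun q => (derivative_translate q).symm) r) q
  refine ⟨(translate R σ p).natDegree + 1, ?_⟩
  rw [← eval_zero_translate ((sumPDeriv R σ)^[_] p), iterate_translate,
    Polynomial.iterate_derivative_eq_zero (Nat.lt_succ_self _), Polynomial.eval_zero]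

end Translation

section Phi

variable {k : Type} [Field k] {l : ℕ}

variable (k l) in
/-- The Vandermonde polynomial `∏_{i<j} (zᵢ - z_j)`; `Φ` is the localization at it. -/
def vandermonde : MvPolynomial (Fin l) k :=
  ∏ i : Fin l, ∏ j : Fin l, if i < j then .X i - .X j else 1

lemma algebraMap_vandermonde : algebraMap _ (RF k l) (vandermonde k l) =
    ∏ i : Fin l, ∏ j : Fin l, if i < j then zv i - zv j else 1 := by
  simp only [vandermonde, map_prod, apply_ite (algebraMap _ (RF k l)), map_sub, map_one]
  rfl

lemma vandermonde_ne_zero : vandermonde k l ≠ 0 := by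
  refine Finset.prod_ne_zero_iff.mpr fun i _ => Finset.prod_ne_zero_iff.mpr fun j _ => ?_
  split_ifs with h
  · exact sub_ne_zero.mpr ((MvPolynomial.X_injective).ne h.ne)
  · exact one_ne_zero

lemma translate_vandermonde :
    translate k (Fin l) (vandermonde k l) = Polynomial.C (vandermonde k l) := by
  simp only [vandermonde, map_prod]
  refine Finset.prod_congr rfl fun i _ => Finset.prod_congr rfl fun j _ => ?_
  split_ifs
  · simp only [map_sub, translate_X, add_sub_add_right_eq_sub]
  · simp only [map_one]

variable (k l) in
/-- `Φ` as the localization of the polynomial ring at the Vandermonde polynomial, which makes its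
ring structure available. -/
def phiSubalgebra : Subalgebra (MvPolynomial (Fin l) k) (RF k l) :=
  Localization.subalgebra.ofField (RF k l) (Submonoid.powers (vandermonde k l))
    (powers_le_nonZeroDivisors_of_noZeroDivisors vandermonde_ne_zero)

lemma mem_phiSubalgebra {x : RF k l} : x ∈ phiSubalgebra k l ↔ ∃ (p : MvPolynomial (Fin l) k)
    (N : ℕ), x = algebraMap _ (RF k l) p * (algebraMap _ (RF k l) (vandermonde k l) ^ N)⁻¹ := by
  constructor
  · rintro ⟨p, _, ⟨N, rfl⟩, hx⟩
    exact ⟨p, N, by rw [hx, map_pow]⟩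
  · rintro ⟨p, N, hx⟩
    exact ⟨p, _, ⟨N, rfl⟩, by rw [hx, map_pow]⟩

lemma algebraMap_mem_phiSubalgebra (p : MvPolynomial (Fin l) k) :
    algebraMap _ (RF k l) p ∈ phiSubalgebra k l := Subalgebra.algebraMap_mem _ p

lemma inv_sub_mem_phiSubalgebra {i j : Fin l} (hij : i ≠ j) :
    (zv i - zv j : RF k l)⁻¹ ∈ phiSubalgebra k l := by
  wlog h : i < j generalizing i j
  · rw [← neg_sub, inv_neg]
    exact neg_mem (this hij.symm (lt_of_le_of_ne (not_lt.mp h) hij.symm))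
  obtain ⟨q, hq⟩ : (MvPolynomial.X i - MvPolynomial.X j) ∣ vandermonde k l := by
    refine dvd_trans ?_ (Finset.dvd_prod_of_mem _ (Finset.mem_univ i))
    refine dvd_trans ?_ (Finset.dvd_prod_of_mem _ (Finset.mem_univ j))
    rw [if_pos h]
  have hq' : algebraMap _ (RF k l) (vandermonde k l) = (zv i - zv j) * algebraMap _ (RF k l) q := by
    rw [hq, map_mul, map_sub]
    rfl
  have hq_ne : algebraMap _ (RF k l) q ≠ 0 := fun h0 => vandermonde_ne_zero (k := k) (l := l) <|
    IsFractionRing.injective _ (RF k l) (by rw [hq', h0, mul_zero, map_zero])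
  exact mem_phiSubalgebra.mpr ⟨q, 1, by rw [pow_one, hq', mul_inv_rev, mul_inv_cancel_left₀ hq_ne]⟩

lemma mem_phiSubalgebra_iff_mem_Phi {x : RF k l} : x ∈ phiSubalgebra k l ↔ x ∈ Phi k l := by
  constructor
  · intro hx
    obtain ⟨p, N, rfl⟩ := mem_phiSubalgebra.mp hx
    refine ⟨p, fun _ _ => -N, ?_⟩
    simp only [algebraMap_vandermonde, ← Finset.prod_pow, ← Finset.prod_inv_distrib, ite_pow,
      one_pow, apply_ite (·⁻¹), inv_one, zpow_neg, zpow_natCast]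
  · rintro ⟨p, e, rfl⟩
    refine mul_mem (algebraMap_mem_phiSubalgebra p) (prod_mem fun i _ => prod_mem fun j _ => ?_)
    split_ifs with h
    · have sub_mem : (zv i - zv j : RF k l) ∈ phiSubalgebra k l :=
        sub_mem (algebraMap_mem_phiSubalgebra (.X i)) (algebraMap_mem_phiSubalgebra (.X j))
      rcases (e i j).eq_nat_or_neg with ⟨n, hn | hn⟩
      · simpa [hn] using pow_mem sub_mem n
      · simpa [hn] using pow_mem (inv_sub_mem_phiSubalgebra (k := k) h.ne) n
    · exact one_mem _

lemma derivation_mem_phiSubalgebra (d : Derivation k (RF k l) (RF k l))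
    (hd : ∀ i, d (zv i) ∈ phiSubalgebra k l) {x : RF k l}
    (hx : x ∈ phiSubalgebra k l) : d x ∈ phiSubalgebra k l := by
  have polynomial_mem (p : MvPolynomial (Fin l) k) :
      d (algebraMap _ (RF k l) p) ∈ phiSubalgebra k l := by
    induction p using MvPolynomial.induction_on with
    | C c =>
      rw [← MvPolynomial.algebraMap_eq, ← IsScalarTower.algebraMap_apply, Derivation.map_algebraMap]
      exact zero_mem _
    | add p q hp hq => rw [map_add, map_add]; exact add_mem hp hq
    | mul_X p i hp =>
      rw [map_mul, Derivation.leibniz]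
      exact add_mem (mul_mem (algebraMap_mem_phiSubalgebra p) (hd i))
        (mul_mem (algebraMap_mem_phiSubalgebra (.X i)) hp)
  obtain ⟨p, N, rfl⟩ := mem_phiSubalgebra.mp hx
  have inv_mem : (algebraMap _ (RF k l) (vandermonde k l) ^ N)⁻¹ ∈ phiSubalgebra k l :=
    mem_phiSubalgebra.mpr ⟨1, N, by rw [map_one, one_mul]⟩
  rw [Derivation.leibniz, Derivation.leibniz_inv, ← map_pow]
  rw [← map_pow] at inv_mem
  exact add_mem (mul_mem (algebraMap_mem_phiSubalgebra p)
      (mul_mem (neg_mem (pow_mem inv_mem 2)) (polynomial_mem _)))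
    (mul_mem inv_mem (polynomial_mem p))

end Phi

section SlTwo

open LieModule in
lemma lie_f_eq_zero_of_weight_zero {R L M : Type*} [CommRing R] [LieRing L] [LieAlgebra R L]
    [AddCommGroup M] [Module R M] [LieRingModule L M] [LieModule R L M] [IsDomain R] [CharZero R]
    [Module.IsTorsionFree R M] {h e f : L} {t : IsSl2Triple h e f} {m : M}
    (hm : t.HasPrimitiveVectorWith m (0 : R)) (nilpotent : ∃ r, (toEnd R L M f ^ r) m = 0) :
    ⁅f, m⁆ = 0 := by
  obtain ⟨r, hr⟩ := nilpotent
  induction r with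
  | zero => exact absurd hr hm.ne_zero
  | succ n ih =>
    rcases eq_or_ne n 0 with rfl | hn
    · simpa using hr
    · have := hm.lie_e_pow_succ_toEnd_f n
      rw [hr, lie_zero, eq_comm, smul_eq_zero] at this
      refine ih (this.resolve_left (mul_ne_zero (Nat.cast_add_one_ne_zero n) ?_))
      simpa using hn

end SlTwo

section VectorFields

attribute [local instance] LieRing.ofAssociativeRing

variable {k : Type} [Field k] {l : ℕ} {D : Fin l → Derivation k (RF k l) (RF k l)}

variable (D) in
/-- The vector field `∑ᵢ zᵢᵐ ∂ᵢ`. For `m = 0` it is `Δ`, for `m = 1` the Euler field and for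
`m = 2` the leading part of `Δ*`. -/
def powerField (m : ℕ) : Derivation k (RF k l) (RF k l) := ∑ i, (zv i ^ m : RF k l) • D i

lemma powerField_apply (m : ℕ) (x : RF k l) : powerField D m x = ∑ i, zv i ^ m * D i x := by
  simp only [powerField, ← Derivation.coeFnAddMonoidHom_apply, map_sum, Finset.sum_apply]
  rfl

lemma powerField_zero_apply (x : RF k l) : powerField D 0 x = Delta D x := by
  simp only [powerField_apply, pow_zero, one_mul, Delta]

lemma DeltaStar_eq_powerField_add (n : Fin l → ℤ) (x : RF k l) :
    DeltaStar D n x = powerField D 2 x + (∑ i, (n i : RF k l) * zv i) * x := by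
  rw [DeltaStar, Finset.sum_add_distrib, powerField_apply, Finset.sum_mul]

variable (D) in
/-- `Δ` as an endomorphism: the lowering operator of an `sl₂`-triple. -/
def deltaEnd : Module.End k (RF k l) := (powerField D 0).toLinearMap

variable (D) in
/-- `Δ*(n₁,…,n_l)` as an endomorphism: up to sign, the raising operator of an `sl₂`-triple. -/
def deltaStarEnd (n : Fin l → ℤ) : Module.End k (RF k l) :=
  (powerField D 2).toLinearMap + LinearMap.mulLeft k (∑ i, (n i : RF k l) * zv i)

variable (D) in
/-- `2 ∑ᵢ zᵢ∂ᵢ + ∑ᵢ nᵢ`: the weight operator of an `sl₂`-triple. -/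
def weightEnd (n : Fin l → ℤ) : Module.End k (RF k l) :=
  2 • (powerField D 1).toLinearMap + LinearMap.mulLeft k (∑ i, (n i : RF k l))

lemma deltaEnd_apply (x : RF k l) : deltaEnd D x = powerField D 0 x := rfl

lemma deltaStarEnd_apply (n : Fin l → ℤ) (x : RF k l) :
    deltaStarEnd D n x = powerField D 2 x + (∑ i, (n i : RF k l) * zv i) * x := rfl

lemma weightEnd_apply (n : Fin l → ℤ) (x : RF k l) :
    weightEnd D n x = 2 * powerField D 1 x + (∑ i, (n i : RF k l)) * x := by
  rw [two_mul, ← two_nsmul]; rfl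

variable (hD : IsPartialDeriv D)
include hD

lemma powerField_zv (m : ℕ) (i : Fin l) : powerField D m (zv i) = zv i ^ m := by
  simp only [powerField_apply, hD _ i, mul_ite, mul_one, mul_zero, Finset.sum_ite_eq,
    Finset.mem_univ, if_true]

lemma powerField_sum_intCast_mul_zv (m : ℕ) (n : Fin l → ℤ) :
    powerField D m (∑ i, (n i : RF k l) * zv i) = ∑ i, (n i : RF k l) * zv i ^ m := by
  simp only [map_sum, Derivation.leibniz, Derivation.map_intCast, powerField_zv hD, smul_eq_mul,
    mul_zero, add_zero]

lemma lie_powerField {a b m : ℕ} (h : a + b = m + 1) :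
    ⁅powerField D a, powerField D b⁆ = ((b : ℤ) - a) • powerField D m := by
  refine derivation_ext_zv fun i => ?_
  have cast_mul_pow {a b : ℕ} (h : a + b = m + 1) :
      (b : RF k l) * (zv i : RF k l) ^ (b - 1) * zv i ^ a = (b : RF k l) * zv i ^ m := by
    rcases b with _ | b
    · rw [Nat.cast_zero, zero_mul, zero_mul, zero_mul]
    · rw [mul_assoc, ← pow_add, show b + 1 - 1 + a = m by omega]
  rw [Derivation.commutator_apply, powerField_zv hD, powerField_zv hD, Derivation.leibniz_pow,
    Derivation.leibniz_pow, powerField_zv hD, powerField_zv hD, Derivation.smul_apply,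
    powerField_zv hD]
  simp only [smul_eq_mul, nsmul_eq_mul, zsmul_eq_mul, ← mul_assoc]
  rw [cast_mul_pow h, cast_mul_pow (add_comm a b ▸ h)]
  push_cast
  ring

lemma lie_powerField_partialDeriv (m : ℕ) (s : Fin l) :
    ⁅powerField D m, D s⁆ = -((m : RF k l) * zv s ^ (m - 1)) • D s := by
  refine derivation_ext_zv fun i => ?_
  rw [Derivation.commutator_apply, powerField_zv hD, Derivation.leibniz_pow, Derivation.smul_apply,
    hD]
  split_ifs with h
  · rw [h, Derivation.map_one_eq_zero, zero_sub, smul_eq_mul, mul_one, nsmul_eq_mul, smul_eq_mul,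
      mul_one]
  · simp only [map_zero, smul_zero, sub_zero]

lemma powerField_zero_algebraMap (p : MvPolynomial (Fin l) k) :
    powerField D 0 (algebraMap _ (RF k l) p) = algebraMap _ (RF k l) (sumPDeriv k (Fin l) p) :=
  derivation_algebraMap_mvPolynomial _ _ (fun i => by
    rw [sumPDeriv_X, map_one]; exact (powerField_zv hD 0 i).trans (pow_zero _)) p

lemma powerField_zero_vandermonde_pow (N : ℕ) :
    powerField D 0 (algebraMap _ (RF k l) (vandermonde k l) ^ N) = 0 := by
  rw [← map_pow, powerField_zero_algebraMap hD, Derivation.leibniz_pow,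
    sumPDeriv_eq_zero_of_translate_eq translate_vandermonde, smul_zero, smul_zero, map_zero]

lemma exists_iterate_powerField_zero_eq_zero {x : RF k l} (hx : x ∈ Phi k l) :
    ∃ r, (powerField D 0)^[r] x = 0 := by
  obtain ⟨p, N, rfl⟩ := mem_phiSubalgebra.mp (mem_phiSubalgebra_iff_mem_Phi.mpr hx)
  set v : RF k l := (algebraMap _ (RF k l) (vandermonde k l) ^ N)⁻¹
  have map_v : powerField D 0 v = 0 := by
    rw [Derivation.leibniz_inv, powerField_zero_vandermonde_pow hD, smul_zero]
  have iterate_mul_v (r : ℕ) (q : MvPolynomial (Fin l) k) :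
      (powerField D 0)^[r] (algebraMap _ (RF k l) q * v) =
        algebraMap _ (RF k l) ((sumPDeriv k (Fin l))^[r] q) * v := by
    induction r with
    | zero => rfl
    | succ r ih =>
      rw [Function.iterate_succ_apply', ih, Derivation.leibniz, map_v,
        powerField_zero_algebraMap hD, Function.iterate_succ_apply', smul_zero, zero_add,
        smul_eq_mul, mul_comm]
  obtain ⟨r, hr⟩ := exists_iterate_sumPDeriv_eq_zero p
  exact ⟨r, by rw [iterate_mul_v, hr, map_zero, zero_mul]⟩

lemma weightEnd_ne_zero [CharZero k] [Nonempty (Fin l)] (n : Fin l → ℤ) : weightEnd D n ≠ 0 := by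
  intro h
  let i := Classical.arbitrary (Fin l)
  have at_one : weightEnd D n 1 = 0 := by rw [h, LinearMap.zero_apply]
  have at_zv : weightEnd D n (zv i) = 0 := by rw [h, LinearMap.zero_apply]
  rw [weightEnd_apply, Derivation.map_one_eq_zero] at at_one
  rw [weightEnd_apply, powerField_zv hD] at at_zv
  have : CharZero (RF k l) :=
    charZero_of_injective_algebraMap (algebraMap k (RF k l)).injective
  refine mul_ne_zero two_ne_zero (zv_ne_zero (k := k) i) ?_
  linear_combination at_zv - zv i * at_one

lemma isSl2Triple_weightEnd [CharZero k] [Nonempty (Fin l)] (n : Fin l → ℤ) :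
    IsSl2Triple (weightEnd D n) (-deltaStarEnd D n) (deltaEnd D) := by
  have lie_apply {a b m : ℕ} (h : a + b = m + 1) (x : RF k l) :
      powerField D a (powerField D b x) = powerField D b (powerField D a x) +
        (b - a) * powerField D m x := by
    rw [← sub_eq_iff_eq_add', ← Derivation.commutator_apply, lie_powerField hD h]
    simp only [Derivation.smul_apply, zsmul_eq_mul, Int.cast_sub, Int.cast_natCast]
  have map_mul (a : ℕ) (x : RF k l) :
      powerField D a ((∑ i, (n i : RF k l) * zv i) * x) =
        (∑ i, (n i : RF k l) * zv i) * powerField D a x + (∑ i, (n i : RF k l) * zv i ^ a) * x := by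
    rw [Derivation.leibniz, powerField_sum_intCast_mul_zv hD, smul_eq_mul, smul_eq_mul, mul_comm x]
  have map_const (a : ℕ) (x : RF k l) :
      powerField D a ((∑ i, (n i : RF k l)) * x) = (∑ i, (n i : RF k l)) * powerField D a x := by
    rw [← Int.cast_sum, Derivation.leibniz, Derivation.map_intCast, smul_zero, add_zero,
      smul_eq_mul]
  have map_two_mul (a : ℕ) (x : RF k l) : powerField D a (2 * x) = 2 * powerField D a x := by
    rw [two_mul, map_add, two_mul]
  refine ⟨weightEnd_ne_zero hD n, LinearMap.ext fun x => ?_, LinearMap.ext fun x => ?_,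
    LinearMap.ext fun x => ?_⟩
  all_goals
    simp only [Ring.lie_def, LinearMap.sub_apply, LinearMap.neg_apply, LinearMap.add_apply,
      Module.End.mul_apply, deltaEnd_apply, deltaStarEnd_apply, weightEnd_apply, map_add, map_neg,
      map_mul, map_const, map_two_mul, pow_zero, mul_one, pow_one, two_nsmul]
  · linear_combination -lie_apply (a := 2) (b := 0) (m := 1) rfl x
  · linear_combination -2 * lie_apply (a := 1) (b := 2) (m := 2) rfl x
  · linear_combination 2 * lie_apply (a := 1) (b := 0) (m := 0) rfl x

lemma Delta_eq_zero_of_DeltaStar_eq_zero [CharZero k] {n : Fin l → ℤ} {d : ℤ} {x : RF k l}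
    (hx : x ∈ Phi k l) (star : DeltaStar D n x = 0) (euler : powerField D 1 x = d * x)
    (weight : 2 * d + ∑ i, n i = 0) : Delta D x = 0 := by
  rcases isEmpty_or_nonempty (Fin l) with _ | _
  · exact Finset.sum_of_isEmpty _
  rw [← powerField_zero_apply]
  rcases eq_or_ne x 0 with rfl | hx0
  · rw [map_zero]
  have weight_apply : weightEnd D n x = 0 := by
    have weight_cast : (2 * d + ∑ i, (n i : RF k l) : RF k l) = 0 := by
      rw [← Int.cast_sum]; exact_mod_cast congrArg (Int.cast (R := RF k l)) weight
    rw [weightEnd_apply, euler, ← mul_assoc, ← add_mul, weight_cast, zero_mul]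
  have primitive : (isSl2Triple_weightEnd hD n).HasPrimitiveVectorWith x (0 : k) :=
    { ne_zero := hx0
      lie_h := by rw [zero_smul]; exact weight_apply
      lie_e := by
        rw [DeltaStar_eq_powerField_add] at star
        exact neg_eq_zero.mpr star }
  obtain ⟨r, hr⟩ := exists_iterate_powerField_zero_eq_zero hD hx
  refine lie_f_eq_zero_of_weight_zero primitive ⟨r, ?_⟩
  rw [LieModule.toEnd_module_end, LieHom.id_apply, Module.End.pow_apply]
  exact hr

end VectorFields

section Shift

variable {k : Type} [Field k] {l : ℕ} {S : Finset (Fin l)} {t : Fin l}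

lemma shiftT_algebraMap (ht : t ∉ S) (p : MvPolynomial (Fin l) k) :
    shiftT S t ht (algebraMap _ (RF k l) p) = algebraMap _ (RF k l) (shiftAuxP k l S t p) := by
  unfold shiftT
  exact IsFractionRing.lift_algebraMap
    (fun _ _ h => shiftAuxP_injective S t ht (IsFractionRing.injective _ (RF k l) h)) p

lemma shiftT_zv (ht : t ∉ S) {s : Fin l} (hs : s ∈ S) :
    shiftT S t ht (zv s : RF k l) = zv s - zv t := by
  rw [zv, shiftT_algebraMap, shiftAuxP, AlgHom.toRingHom_eq_coe, RingHom.coe_coe,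
    MvPolynomial.aeval_X, if_pos hs, map_sub]
  rfl

lemma eval_neg_X_translate_of_mem_supported {p : MvPolynomial (Fin l) k}
    (hp : p ∈ MvPolynomial.supported k (S : Set (Fin l))) :
    (translate k (Fin l) p).eval (-.X t) = shiftAuxP k l S t p := by
  have le_equalizer : MvPolynomial.supported k (S : Set (Fin l)) ≤ AlgHom.equalizer
      (((Polynomial.aeval (-MvPolynomial.X t : MvPolynomial (Fin l) k)).restrictScalars k).comp
        (translate k (Fin l)))
      (MvPolynomial.aeval fun s => if s ∈ S then MvPolynomial.X s - MvPolynomial.X t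
        else MvPolynomial.X s) := by
    refine Algebra.adjoin_le ?_
    rintro _ ⟨s, hs, rfl⟩
    rw [Finset.mem_coe] at hs
    simp [translate_X, hs, sub_eq_add_neg]
  exact le_equalizer hp

variable {D : Fin l → Derivation k (RF k l) (RF k l)} (hD : IsPartialDeriv D)
include hD

lemma shiftT_eq_self [CharZero k] (ht : t ∉ S) {x : RF k l} (hx : x ∈ Phi k l)
    (dep : dependsOnlyOn S x) (delta : powerField D 0 x = 0) : shiftT S t ht x = x := by
  obtain ⟨p, N, hpN⟩ := mem_phiSubalgebra.mp (mem_phiSubalgebra_iff_mem_Phi.mpr hx)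
  obtain ⟨a, ha, b, hb, hab⟩ := dep.exists_supported
  have inj := IsFractionRing.injective (MvPolynomial (Fin l) k) (RF k l)
  have vandermonde_pow_ne : algebraMap _ (RF k l) (vandermonde k l) ^ N ≠ 0 :=
    pow_ne_zero N ((map_ne_zero_iff _ inj).mpr vandermonde_ne_zero)
  rcases eq_or_ne b 0 with rfl | hb0
  · rw [← hab, map_zero, div_zero, map_zero]
  have map_b_ne : algebraMap _ (RF k l) b ≠ 0 := (map_ne_zero_iff _ inj).mpr hb0
  have map_p : algebraMap _ (RF k l) p = x * algebraMap _ (RF k l) (vandermonde k l) ^ N := by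
    rw [hpN, inv_mul_cancel_right₀ vandermonde_pow_ne]
  have translate_p : translate k (Fin l) p = .C p := by
    refine translate_eq_of_sumPDeriv_eq_zero (inj ?_)
    rw [← powerField_zero_algebraMap hD, map_p, Derivation.leibniz, delta,
      powerField_zero_vandermonde_pow hD, smul_zero, smul_zero, add_zero, map_zero]
  have cross_mul : a * vandermonde k l ^ N = p * b := inj <| by
    rw [map_mul, map_mul, map_pow, map_p, mul_right_comm, ← hab, div_mul_cancel₀ _ map_b_ne]
  -- On polynomials in the variables of `S` the shift agrees with the translation by `-z_t`, which
  -- fixes `p` and the Vandermonde polynomial.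
  have shifted := congrArg (fun q => (translate k (Fin l) q).eval (-.X t)) cross_mul
  simp only [map_mul, map_pow, translate_vandermonde, translate_p, Polynomial.eval_mul,
    Polynomial.eval_pow, Polynomial.eval_C, eval_neg_X_translate_of_mem_supported ha,
    eval_neg_X_translate_of_mem_supported hb] at shifted
  have shift_b_ne : shiftT S t ht (algebraMap _ (RF k l) b) ≠ 0 := (map_ne_zero _).mpr map_b_ne
  calc shiftT S t ht x
      = shiftT S t ht (algebraMap _ (RF k l) a) / shiftT S t ht (algebraMap _ (RF k l) b) := by
        rw [← map_div₀, hab]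
    _ = algebraMap _ (RF k l) p / algebraMap _ (RF k l) (vandermonde k l) ^ N := by
        rw [div_eq_div_iff shift_b_ne vandermonde_pow_ne, shiftT_algebraMap, shiftT_algebraMap,
          ← map_pow, ← map_mul, ← map_mul, shifted]
    _ = x := by rw [hpN, div_eq_mul_inv]

end Shift

section ShiftedTerms

variable {k : Type} [Field k] {l : ℕ} {S : Finset (Fin l)} {t : Fin l}
  {D : Fin l → Derivation k (RF k l) (RF k l)}

variable (D) in
/-- The summand `-(z_s - z_t)⁻¹∂_sβ + 2(z_s - z_t)⁻²β` of `Tℰβ`, for a translation invariant `β`. -/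
def shiftedTerm (t s : Fin l) (β : RF k l) : RF k l :=
  (zv t - zv s)⁻¹ * D s β + 2 * (zv t - zv s)⁻¹ ^ 2 * β

lemma DeltaStar_sum {ι : Type*} (n : Fin l → ℤ) (I : Finset ι) (f : ι → RF k l) :
    DeltaStar D n (∑ i ∈ I, f i) = ∑ i ∈ I, DeltaStar D n (f i) := by
  simp only [DeltaStar_eq_powerField_add, map_sum, Finset.mul_sum, Finset.sum_add_distrib]

variable (hD : IsPartialDeriv D)
include hD

lemma sum_partialDeriv_eq_Delta {x : RF k l} (hx : dependsOnlyOn S x) :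
    ∑ s ∈ S, D s x = Delta D x :=
  Finset.sum_subset S.subset_univ fun _ _ hi => partialDeriv_eq_zero_of_dependsOnlyOn hD hi hx

lemma sum_sq_mul_partialDeriv_add_eq_DeltaStar {x : RF k l} (hx : dependsOnlyOn S x) :
    ∑ s ∈ S, (zv s ^ 2 * D s x + 4 * zv s * x) =
      DeltaStar D (fun i => if i ∈ S then 4 else 0) x := by
  rw [DeltaStar, ← Finset.sum_subset S.subset_univ fun i _ hi => ?_]
  · refine Finset.sum_congr rfl fun i hi => ?_
    rw [if_pos hi, Int.cast_ofNat]
  · rw [if_neg hi, partialDeriv_eq_zero_of_dependsOnlyOn hD hi hx, Int.cast_zero, mul_zero,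
      zero_mul, zero_mul, add_zero]

lemma partialDeriv_mem_Phi (s : Fin l) {x : RF k l} (hx : x ∈ Phi k l) : D s x ∈ Phi k l := by
  refine mem_phiSubalgebra_iff_mem_Phi.mp
    (derivation_mem_phiSubalgebra (D s) (fun i => ?_) (mem_phiSubalgebra_iff_mem_Phi.mpr hx))
  rw [hD]
  split_ifs
  exacts [one_mem _, zero_mem _]

lemma powerField_zero_partialDeriv (s : Fin l) (x : RF k l) :
    powerField D 0 (D s x) = D s (powerField D 0 x) := by
  rw [← sub_eq_zero, ← Derivation.commutator_apply, lie_powerField_partialDeriv hD, Nat.cast_zero,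
    zero_mul, neg_zero, zero_smul, Derivation.zero_apply]

lemma powerField_two_partialDeriv (s : Fin l) (x : RF k l) :
    powerField D 2 (D s x) = D s (powerField D 2 x) - 2 * zv s * D s x := by
  rw [sub_eq_add_neg (D s _), ← sub_eq_iff_eq_add', ← Derivation.commutator_apply,
    lie_powerField_partialDeriv hD, Derivation.smul_apply, Nat.cast_ofNat, pow_one,
    smul_eq_mul, neg_mul]

lemma shiftedTerm_mem_Phi {s : Fin l} (hst : t ≠ s) {β : RF k l} (hβ : β ∈ Phi k l) :
    shiftedTerm D t s β ∈ Phi k l := by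
  have hDβ := mem_phiSubalgebra_iff_mem_Phi.mpr (partialDeriv_mem_Phi hD s hβ)
  rw [← mem_phiSubalgebra_iff_mem_Phi] at hβ ⊢
  have inv_mem := inv_sub_mem_phiSubalgebra (k := k) hst
  exact add_mem (mul_mem inv_mem hDβ) (mul_mem (mul_mem (ofNat_mem _ 2) (pow_mem inv_mem 2)) hβ)

lemma dependsOnlyOn_shiftedTerm {s : Fin l} (hs : s ∈ S) {β : RF k l} (hβ : dependsOnlyOn S β) :
    dependsOnlyOn (insert t S) (shiftedTerm D t s β) := by
  have hS := Finset.subset_insert t S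
  have inv_mem : dependsOnlyOn (insert t S) (zv t - zv s : RF k l)⁻¹ :=
    inv_mem (sub_mem (dependsOnlyOn_zv (S.mem_insert_self t)) (dependsOnlyOn_zv (hS hs)))
  exact add_mem (mul_mem inv_mem ((hβ.partialDeriv hD s).mono hS))
    (mul_mem (mul_mem (ofNat_mem _ 2) (pow_mem inv_mem 2)) (hβ.mono hS))

lemma shiftT_curlyE [CharZero k] (ht : t ∉ S) {β : RF k l} (hβ : β ∈ Phi k l)
    (dep : dependsOnlyOn S β) (delta : Delta D β = 0) :
    shiftT S t ht (curlyE D S β) = ∑ s ∈ S, shiftedTerm D t s β := by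
  rw [← powerField_zero_apply] at delta
  rw [curlyE, map_sum]
  refine Finset.sum_congr rfl fun s hs => ?_
  have shift_partialDeriv : shiftT S t ht (D s β) = D s β :=
    shiftT_eq_self hD ht (partialDeriv_mem_Phi hD s hβ) (dep.partialDeriv hD s)
      (by rw [powerField_zero_partialDeriv hD, delta, map_zero])
  rw [map_add, map_neg, map_mul, map_mul, map_mul, map_inv₀, map_zpow₀, map_ofNat, shiftT_zv ht hs,
    shift_partialDeriv, shiftT_eq_self hD ht hβ dep delta, shiftedTerm, ← neg_mul, ← inv_neg,
    neg_sub, ← neg_sub (zv t), Even.neg_zpow even_neg_two, zpow_neg, inv_pow]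
  rfl

lemma DeltaStar_shiftedTerm {s : Fin l} (hst : t ≠ s) {n : Fin l → ℤ} (hn : n s = 4) {β : RF k l}
    (star : DeltaStar D n β = 0) :
    DeltaStar D (n + Pi.single t 4) (shiftedTerm D t s β) = 3 * D s β := by
  rw [DeltaStar_eq_powerField_add] at star
  set c : RF k l := ∑ i, (n i : RF k l) * zv i
  have weight : ∑ i, ((n + Pi.single t 4 : Fin l → ℤ) i : RF k l) * zv i = c + 4 * zv t := by
    simp [c, Pi.single_apply, add_mul, Finset.sum_add_distrib]
  have map_c : D s c = 4 := by
    simp [c, hD s, hn]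
  have map_β : powerField D 2 β = -(c * β) := eq_neg_of_add_eq_zero_left star
  have map_Dβ : powerField D 2 (D s β) = -(4 * β + c * D s β) - 2 * zv s * D s β := by
    rw [powerField_two_partialDeriv hD, map_β, map_neg, Derivation.leibniz, map_c, smul_eq_mul,
      smul_eq_mul]
    ring
  have inv_mul : (zv t - zv s : RF k l)⁻¹ * (zv t - zv s) = 1 :=
    inv_mul_cancel₀ (sub_ne_zero.mpr (zv_injective.ne hst))
  have map_inv : powerField D 2 (zv t - zv s)⁻¹ = -((zv t - zv s)⁻¹ * (zv t + zv s)) := by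
    rw [Derivation.leibniz_inv, map_sub, powerField_zv hD, powerField_zv hD, smul_eq_mul]
    linear_combination -(zv t - zv s)⁻¹ * (zv t + zv s) * inv_mul
  rw [DeltaStar_eq_powerField_add, weight, shiftedTerm]
  generalize (zv t - zv s : RF k l)⁻¹ = u at *
  have map_two_mul_sq : powerField D 2 (2 * u ^ 2) = -(4 * u ^ 2 * (zv t + zv s)) := by
    rw [pow_two, two_mul, map_add, Derivation.leibniz, map_inv, smul_eq_mul]
    ring
  rw [map_add, Derivation.leibniz, Derivation.leibniz, map_two_mul_sq, map_inv, map_Dβ, map_β]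
  simp only [smul_eq_mul]
  linear_combination (3 * D s β + 4 * u * β) * inv_mul

lemma dependsOnlyOn_sum_shiftedTerm {β : RF k l} (hβ : dependsOnlyOn S β) :
    dependsOnlyOn (insert t S) (∑ s ∈ S, shiftedTerm D t s β) :=
  sum_mem fun _ hs => dependsOnlyOn_shiftedTerm hD hs hβ

lemma DeltaStar_sum_shiftedTerm {n : Fin l → ℤ} (ht : t ∉ S) (hn : ∀ s ∈ S, n s = 4) {β : RF k l}
    (dep : dependsOnlyOn S β) (star : DeltaStar D n β = 0) (delta : Delta D β = 0) :
    DeltaStar D (n + Pi.single t 4) (∑ s ∈ S, shiftedTerm D t s β) = 0 := by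
  rw [DeltaStar_sum, Finset.sum_congr rfl fun s hs =>
    DeltaStar_shiftedTerm hD (ne_of_mem_of_not_mem hs ht).symm (hn s hs) star, ← Finset.mul_sum,
    sum_partialDeriv_eq_Delta hD dep, delta, mul_zero]

lemma regular_sum_shiftedTerm (ht : t ∉ S) {β : RF k l} (dep : dependsOnlyOn S β)
    (star : ∑ s ∈ S, (zv s ^ 2 * D s β + 4 * zv s * β) = 0) (delta : Delta D β = 0) :
    ∑ i ∈ insert t S, (zv i ^ 2 * D i (∑ s ∈ S, shiftedTerm D t s β)
      + 4 * zv i * ∑ s ∈ S, shiftedTerm D t s β) = 0 := by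
  have weights : (fun i => if i ∈ insert t S then (4 : ℤ) else 0) =
      (fun i => if i ∈ S then 4 else 0) + Pi.single t 4 := by
    ext i
    rcases eq_or_ne i t with rfl | hi
    · simp [ht]
    · simp [hi]
  rw [sum_sq_mul_partialDeriv_add_eq_DeltaStar hD dep] at star
  rw [sum_sq_mul_partialDeriv_add_eq_DeltaStar hD (dependsOnlyOn_sum_shiftedTerm hD dep), weights]
  exact DeltaStar_sum_shiftedTerm hD ht (fun s hs => if_pos hs) dep star delta

end ShiftedTerms

section Expansion

open scoped LaurentSeries RatFunc
open HahnSeries (C single)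

lemma algebraMap_X_zpow_mul_C {L : Type*} [Field L] (d : ℤ) (a : L) :
    algebraMap (RatFunc L) L⸨X⸩ (RatFunc.X ^ d * RatFunc.C a) = single d a := by
  have map_C : algebraMap (RatFunc L) L⸨X⸩ (RatFunc.C a) = C a := by
    rw [← RatFunc.algebraMap_C,
      ← IsScalarTower.algebraMap_apply (Polynomial L) (RatFunc L) L⸨X⸩]
    simp
  rw [map_mul, map_zpow₀, RatFunc.coe_X, map_C, ← RatFunc.single_zpow, HahnSeries.C_apply,
    HahnSeries.single_mul_single, add_zero, one_mul]

attribute [local instance] laurentAlgebra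

variable {k : Type} [Field k] {l : ℕ} {S J : Finset (Fin l)}

lemma scaleJ_algebraMap (J : Finset (Fin l)) (p : MvPolynomial (Fin l) k) :
    scaleJ J (algebraMap _ (RF k l) p) = toRatFuncHom k l (scaleAux k l J p) := by
  unfold scaleJ
  exact IsFractionRing.lift_algebraMap
    (fun _ _ h => scaleAux_injective J (toRatFuncHom_injective h)) p

/-- The Laurent expansion of a rational function in the domain where the variables indexed by `J`
are much smaller than the others. The power of `X` records the total degree in those variables. -/
def expand (J : Finset (Fin l)) : RF k l →ₐ[k] (RF k l)⸨X⸩ where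
  toRingHom := (algebraMap (RatFunc (RF k l)) (RF k l)⸨X⸩).comp (scaleJ J)
  commutes' c := by
    have scaleJ_constant : scaleJ J (algebraMap k (RF k l) c) =
        RatFunc.X ^ (0 : ℤ) * RatFunc.C (algebraMap _ _ c) := by
      rw [IsScalarTower.algebraMap_apply k (MvPolynomial (Fin l) k) (RF k l), scaleJ_algebraMap]
      simp [scaleAux, toRatFuncHom, MvPolynomial.algebraMap_eq]
    exact (congrArg (algebraMap _ (RF k l)⸨X⸩) scaleJ_constant).trans
      (algebraMap_X_zpow_mul_C 0 _)

lemma expand_apply (J : Finset (Fin l)) (x : RF k l) :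
    expand J x = algebraMap (RatFunc (RF k l)) (RF k l)⸨X⸩ (scaleJ J x) := rfl

lemma isHomogeneousOn_iff {d : ℤ} {x : RF k l} :
    IsHomogeneousOn S d x ↔ expand S x = single d x := by
  rw [IsHomogeneousOn, expand_apply, ← algebraMap_X_zpow_mul_C,
    (algebraMap (RatFunc (RF k l)) (RF k l)⸨X⸩).injective.eq_iff]

lemma expand_zv (J : Finset (Fin l)) (i : Fin l) :
    expand J (zv i : RF k l) = single (if i ∈ J then 1 else 0) (zv i) := by
  have scaleJ_zv : scaleJ J (zv i : RF k l) =
      RatFunc.X ^ (if i ∈ J then 1 else 0 : ℤ) * RatFunc.C (zv i : RF k l) := by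
    rw [zv, scaleJ_algebraMap]
    split_ifs with hi <;> simp [scaleAux, toRatFuncHom, hi, -Polynomial.X_mul_C]
  rw [expand_apply, scaleJ_zv, algebraMap_X_zpow_mul_C]

lemma expand_zv_of_mem {i : Fin l} (hi : i ∈ J) :
    expand J (zv i : RF k l) = single 1 1 * C (zv i) := by
  rw [expand_zv, if_pos hi, HahnSeries.C_apply, HahnSeries.single_mul_single, add_zero, one_mul]

lemma expand_zv_of_notMem {i : Fin l} (hi : i ∉ J) : expand J (zv i : RF k l) = C (zv i) := by
  rw [expand_zv, if_neg hi, HahnSeries.C_apply]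

lemma expand_congr {J' : Finset (Fin l)} (h : ∀ i ∈ S, i ∈ J ↔ i ∈ J') {x : RF k l}
    (hx : dependsOnlyOn S x) : expand J x = expand J' x := by
  refine RingHom.eqOn_field_closure (f := (expand J).toRingHom) (g := (expand J').toRingHom) ?_ hx
  rintro _ (⟨c, rfl⟩ | ⟨i, hi, rfl⟩)
  · exact ((expand J).commutes c).trans ((expand J').commutes c).symm
  · exact (expand_zv J i).trans (by simp only [h i hi]; exact (expand_zv J' i).symm)

end Expansion

section Homogeneity

open scoped LaurentSeries
open HahnSeries (C single)

attribute [local instance] laurentAlgebra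

variable {k : Type} [Field k] {l : ℕ} {S : Finset (Fin l)} {d e : ℤ} {x y : RF k l}

lemma isHomogeneousOn_zv {i : Fin l} (hi : i ∈ S) : IsHomogeneousOn S 1 (zv i : RF k l) := by
  rw [isHomogeneousOn_iff, expand_zv, if_pos hi]

lemma isHomogeneousOn_algebraMap (c : k) : IsHomogeneousOn S 0 (algebraMap k (RF k l) c) := by
  rw [isHomogeneousOn_iff, (expand S).commutes, HahnSeries.algebraMap_apply, HahnSeries.C_apply]

lemma IsHomogeneousOn.sum {ι : Type*} {I : Finset ι} {f : ι → RF k l}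
    (hf : ∀ i ∈ I, IsHomogeneousOn S d (f i)) : IsHomogeneousOn S d (∑ i ∈ I, f i) := by
  rw [IsHomogeneousOn, map_sum, map_sum, Finset.mul_sum]
  exact Finset.sum_congr rfl hf

lemma IsHomogeneousOn.add (hx : IsHomogeneousOn S d x) (hy : IsHomogeneousOn S d y) :
    IsHomogeneousOn S d (x + y) := by
  rw [IsHomogeneousOn, map_add, map_add, mul_add, hx, hy]

lemma IsHomogeneousOn.sub (hx : IsHomogeneousOn S d x) (hy : IsHomogeneousOn S d y) :
    IsHomogeneousOn S d (x - y) := by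
  rw [IsHomogeneousOn, map_sub, map_sub, mul_sub, hx, hy]

lemma IsHomogeneousOn.mul (hx : IsHomogeneousOn S d x) (hy : IsHomogeneousOn S e y) :
    IsHomogeneousOn S (d + e) (x * y) := by
  rw [IsHomogeneousOn, map_mul, map_mul, hx, hy, zpow_add₀ RatFunc.X_ne_zero, mul_mul_mul_comm]

lemma IsHomogeneousOn.inv (hx : IsHomogeneousOn S d x) : IsHomogeneousOn S (-d) x⁻¹ := by
  rw [IsHomogeneousOn, map_inv₀, map_inv₀, hx, mul_inv, zpow_neg]

lemma IsHomogeneousOn.mono {S' : Finset (Fin l)} (h : S ⊆ S') (hx : IsHomogeneousOn S d x)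
    (dep : dependsOnlyOn S x) : IsHomogeneousOn S' d x := by
  rw [isHomogeneousOn_iff] at hx ⊢
  rw [← hx, expand_congr (fun i hi => iff_of_true (h hi) hi) dep]

variable {D : Fin l → Derivation k (RF k l) (RF k l)} (hD : IsPartialDeriv D)
include hD

lemma expand_partialDeriv (J : Finset (Fin l)) (s : Fin l) (x : RF k l) :
    expand J (D s x) =
      single (if s ∈ J then -1 else 0) 1 * laurentDerivation (D s) 0 (expand J x) := by
  have cleared : single (if s ∈ J then 1 else 0) 1 * expand J (D s x) =
      laurentDerivation (D s) 0 (expand J x) := by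
    refine (dependsOnlyOn_univ x).mul_map_derivation_eq (expand J) (D s)
      (laurentDerivation (D s) 0) _ fun i _ => ?_
    rw [expand_zv, laurentDerivation_single, hD, mul_zero, zero_mul, add_zero]
    by_cases h : i = s
    · rw [if_pos h, map_one (expand J), mul_one, h]
    · rw [if_neg h, map_zero (expand J), mul_zero, map_zero]
  rw [← cleared, ← mul_assoc, HahnSeries.single_mul_single]
  split_ifs <;> simp

lemma IsHomogeneousOn.partialDeriv {s : Fin l} (hs : s ∈ S) (hx : IsHomogeneousOn S d x) :
    IsHomogeneousOn S (d - 1) (D s x) := by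
  rw [isHomogeneousOn_iff] at hx ⊢
  rw [expand_partialDeriv hD, if_pos hs, hx, laurentDerivation_single, HahnSeries.single_mul_single,
    mul_zero, zero_mul, add_zero, one_mul, neg_add_eq_sub]

lemma IsHomogeneousOn.euler (hx : IsHomogeneousOn S d x) (dep : dependsOnlyOn S x) :
    powerField D 1 x = d * x := by
  rw [isHomogeneousOn_iff] at hx
  have expand_powerField : 1 * expand S (powerField D 1 x) =
      laurentDerivation (0 : Derivation k (RF k l) (RF k l)) 1 (expand S x) := by
    refine dep.mul_map_derivation_eq (expand S) (powerField D 1)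
      (laurentDerivation (0 : Derivation k (RF k l) (RF k l)) 1) 1 fun i hi => ?_
    rw [powerField_zv hD, pow_one, expand_zv, laurentDerivation_single, if_pos hi]
    simp
  refine (expand S).toRingHom.injective ?_
  change expand S (powerField D 1 x) = expand S ((d : RF k l) * x)
  rw [← one_mul (expand S _), expand_powerField, hx, laurentDerivation_single, map_mul, map_intCast,
    hx, ← map_intCast (C (Γ := ℤ)), HahnSeries.C_apply, HahnSeries.single_mul_single, zero_add,
    Derivation.zero_apply, zero_add, mul_one]

lemma isHomogeneousOn_shiftedTerm {s t : Fin l} (hs : s ∈ S) {β : RF k l}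
    (hβ : IsHomogeneousOn S d β) (dep : dependsOnlyOn S β) :
    IsHomogeneousOn (insert t S) (d - 2) (shiftedTerm D t s β) := by
  have hS := Finset.subset_insert t S
  have hinv : IsHomogeneousOn (insert t S) (-1) (zv t - zv s : RF k l)⁻¹ :=
    ((isHomogeneousOn_zv (S.mem_insert_self t)).sub (isHomogeneousOn_zv (hS hs))).inv
  have hβ := hβ.mono hS dep
  have first := hinv.mul (hβ.partialDeriv hD (hS hs))
  have second := ((isHomogeneousOn_algebraMap 2).mul (hinv.mul hinv)).mul hβ
  rw [map_ofNat, ← pow_two] at second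
  rw [shiftedTerm]
  convert first.add (by convert second using 1; ring) using 1
  ring

end Homogeneity

section Components

open scoped LaurentSeries
open HahnSeries (C single)

attribute [local instance] laurentAlgebra

variable {k : Type} [Field k] {l : ℕ} {S J : Finset (Fin l)} {s t : Fin l} {β : RF k l}

/-- The generating series `∑ₙ (α)ₙ Xⁿ` of the components of `α` with respect to the partition
`Jᶜ ⊔ J` and all weights equal to `2`. -/
def componentSeries (J : Finset (Fin l)) : RF k l →+ (RF k l)⸨X⸩ :=
  (AddMonoidHom.mulLeft (single 1 1 ^ (2 * J.card))).comp (expand J).toRingHom.toAddMonoidHom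

lemma componentSeries_apply (J : Finset (Fin l)) (x : RF k l) :
    componentSeries J x = single 1 1 ^ (2 * J.card) * expand J x := rfl

lemma component_eq_coeff (J : Finset (Fin l)) (n : ℤ) (x : RF k l) :
    component J (fun _ => 2) n x = (componentSeries J x).coeff n := by
  rw [componentSeries_apply, HahnSeries.single_pow, one_pow, HahnSeries.coeff_single_mul, one_mul,
    component, lcoeff, expand_apply, Finset.sum_const]
  congr 1
  simp only [nsmul_eq_mul]
  push_cast
  ring

lemma componentSeries_mem_cuspSubring {x : RF k l} :
    componentSeries J x ∈ cuspSubring (RF k l) ↔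
      ∀ n : ℤ, (n < 0 ∨ n = 1) → component J (fun _ => 2) n x = 0 := by
  simp only [component_eq_coeff]
  rfl

lemma componentSeries_mul (J : Finset (Fin l)) (x y : RF k l) :
    componentSeries J (x * y) = expand J x * componentSeries J y := by
  simp only [componentSeries_apply, map_mul]
  ring

lemma componentSeries_eq_X_sq_mul (ht : t ∉ S) (htJ : t ∈ J) {x : RF k l}
    (hx : dependsOnlyOn S x) :
    componentSeries J x = single 1 1 ^ 2 * componentSeries (J.erase t) x := by
  have expand_eq : expand J x = expand (J.erase t) x :=
    expand_congr (fun i hi => by simp [ne_of_mem_of_not_mem hi ht]) hx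
  rw [componentSeries_apply, componentSeries_apply, expand_eq, ← Finset.card_erase_add_one htJ]
  ring

lemma sum_componentSeries_mem_cuspSubring {ι : Type*} {I I' : Finset ι} {f : ι → RF k l}
    (hI : I' ⊆ I) (hf : ∑ i ∈ I, f i = 0)
    (hmem : ∀ i ∈ I, i ∉ I' → componentSeries J (f i) ∈ cuspSubring (RF k l)) :
    ∑ i ∈ I', componentSeries J (f i) ∈ cuspSubring (RF k l) := by
  have sum_eq : ∑ i ∈ I', componentSeries J (f i) = -∑ i ∈ I \ I', componentSeries J (f i) := by
    rw [eq_neg_iff_add_eq_zero, add_comm, Finset.sum_sdiff hI, ← map_sum, hf, map_zero]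
  rw [sum_eq]
  refine neg_mem (sum_mem fun i hi => ?_)
  exact hmem i (Finset.mem_sdiff.mp hi).1 (Finset.mem_sdiff.mp hi).2

lemma componentSeries_shiftedTerm (D : Fin l → Derivation k (RF k l) (RF k l))
    (J : Finset (Fin l)) (t s : Fin l) (β : RF k l) :
    componentSeries J (shiftedTerm D t s β) =
      (expand J (zv t) - expand J (zv s))⁻¹ * componentSeries J (D s β)
        + 2 * (expand J (zv t) - expand J (zv s))⁻¹ ^ 2 * componentSeries J β := by
  simp only [shiftedTerm, map_add, componentSeries_mul, map_mul, map_pow, map_inv₀, map_sub,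
    map_ofNat]

variable {D : Fin l → Derivation k (RF k l) (RF k l)} (hD : IsPartialDeriv D)
include hD

lemma componentSeries_partialDeriv (J : Finset (Fin l)) (s : Fin l) (x : RF k l) :
    componentSeries J (D s x) =
      single (if s ∈ J then -1 else 0) 1 * laurentDerivation (D s) 0 (componentSeries J x) := by
  have derivation_X_pow (n : ℕ) : laurentDerivation (D s) 0 (single 1 1 ^ n) = 0 := by
    simp [HahnSeries.single_pow, laurentDerivation_single]
  rw [componentSeries_apply, expand_partialDeriv hD, componentSeries_apply, Derivation.leibniz,
    derivation_X_pow, smul_zero, add_zero, smul_eq_mul, mul_left_comm]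

lemma componentSeries_partialDeriv_of_mem (hs : s ∈ J) (x : RF k l) :
    componentSeries J (D s x) =
      (single 1 1)⁻¹ * laurentDerivation (D s) 0 (componentSeries J x) := by
  rw [componentSeries_partialDeriv hD, if_pos hs, HahnSeries.inv_single, inv_one]

lemma componentSeries_partialDeriv_of_notMem (hs : s ∉ J) (x : RF k l) :
    componentSeries J (D s x) = laurentDerivation (D s) 0 (componentSeries J x) := by
  rw [componentSeries_partialDeriv hD, if_neg hs, HahnSeries.single_zero_one, one_mul]

lemma componentSeries_shiftedTerm_mem_cuspSubring_of_mem (ht : t ∉ S) (hs : s ∈ S)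
    (dep : dependsOnlyOn S β) (htJ : t ∈ J)
    (hβ : componentSeries (J.erase t) β ∈ cuspSubring (RF k l)) :
    componentSeries J (shiftedTerm D t s β) ∈ cuspSubring (RF k l) := by
  have hst : s ≠ t := ne_of_mem_of_not_mem hs ht
  have hdβ := laurentDerivation_mem_cuspSubring (D s) 0 hβ
  rw [componentSeries_shiftedTerm, componentSeries_eq_X_sq_mul ht htJ dep,
    componentSeries_eq_X_sq_mul ht htJ (dep.partialDeriv hD s), expand_zv_of_mem htJ]
  by_cases hsJ : s ∈ J
  · have hX : (single 1 1 : (RF k l)⸨X⸩) ≠ 0 := by simp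
    rw [expand_zv_of_mem hsJ, ← mul_sub, ← map_sub,
      componentSeries_partialDeriv_of_mem hD (Finset.mem_erase.mpr ⟨hst, hsJ⟩), mul_inv,
      ← map_inv₀ C]
    have hC := C_mem_cuspSubring (zv t - zv s : RF k l)⁻¹
    convert add_mem (mul_mem hC hdβ) (mul_mem (mul_mem (ofNat_mem _ 2) (pow_mem hC 2)) hβ) using 1
    field_simp
  · rw [expand_zv_of_notMem hsJ,
      componentSeries_partialDeriv_of_notMem hD (fun h => hsJ (Finset.mem_of_mem_erase h))]
    have hv := inv_X_mul_C_sub_C_mem_powerSeries (zv_ne_zero s) (zv t : RF k l)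
    have regular := add_mem (mul_mem hv (cuspSubring_le_powerSeries hdβ))
      (mul_mem (mul_mem (ofNat_mem _ 2) (pow_mem hv 2)) (cuspSubring_le_powerSeries hβ))
    convert X_sq_mul_mem_cuspSubring regular using 1
    ring

section NotMem

variable (htJ : t ∉ J) (hβ : componentSeries J β ∈ cuspSubring (RF k l))
include hβ

lemma componentSeries_partialDeriv_mem_cuspSubring (hs : s ∉ J) :
    componentSeries J (D s β) ∈ cuspSubring (RF k l) := by
  rw [componentSeries_partialDeriv_of_notMem hD hs]
  exact laurentDerivation_mem_cuspSubring _ _ hβ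

lemma componentSeries_sq_mul_partialDeriv_add_mem_cuspSubring (hs : s ∉ J) :
    componentSeries J (zv s ^ 2 * D s β + 4 * zv s * β) ∈ cuspSubring (RF k l) := by
  have hC := C_mem_cuspSubring (zv s : RF k l)
  rw [map_add, componentSeries_mul, componentSeries_mul, map_pow, map_mul, map_ofNat,
    expand_zv_of_notMem hs]
  exact add_mem
    (mul_mem (pow_mem hC 2) (componentSeries_partialDeriv_mem_cuspSubring hD hβ hs))
    (mul_mem (mul_mem (ofNat_mem _ 4) hC) hβ)

include htJ

lemma componentSeries_shiftedTerm_mem_cuspSubring_of_notMem (hs : s ∉ J) :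
    componentSeries J (shiftedTerm D t s β) ∈ cuspSubring (RF k l) := by
  have hC := C_mem_cuspSubring (zv t - zv s : RF k l)⁻¹
  rw [componentSeries_shiftedTerm, expand_zv_of_notMem htJ, expand_zv_of_notMem hs, ← map_sub,
    ← map_inv₀ C]
  exact add_mem (mul_mem hC (componentSeries_partialDeriv_mem_cuspSubring hD hβ hs))
    (mul_mem (mul_mem (ofNat_mem _ 2) (pow_mem hC 2)) hβ)

lemma componentSeries_shiftedTerm_sub_mem_cuspSubring (hs : s ∈ J) :
    componentSeries J (shiftedTerm D t s β) -
      (C (zv t)⁻¹ * componentSeries J (D s β)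
        + C (zv t)⁻¹ ^ 3 * componentSeries J (zv s ^ 2 * D s β + 4 * zv s * β)) ∈
      cuspSubring (RF k l) := by
  have hX : (single 1 1 : (RF k l)⸨X⸩) ≠ 0 := by simp
  rw [componentSeries_shiftedTerm, map_add, componentSeries_mul, componentSeries_mul, map_pow,
    map_mul, map_ofNat, expand_zv_of_mem hs, expand_zv_of_notMem htJ,
    componentSeries_partialDeriv_of_mem hD hs]
  convert geometric_expansion_mem_cuspSubring (zv_ne_zero t) (zv s : RF k l)
    (laurentDerivation_mem_cuspSubring (D s) 0 hβ) hβ using 4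
  field_simp

/-- The coefficients of `X⁻¹` and of `X` in the expansion of `(z_t - z_s)⁻¹` sum to zero because
`β` is translation invariant and regular. -/
lemma sum_componentSeries_shiftedTerm_mem_cuspSubring (hJ : J ⊆ S)
    (delta : ∑ s ∈ S, D s β = 0) (star : ∑ s ∈ S, (zv s ^ 2 * D s β + 4 * zv s * β) = 0) :
    ∑ s ∈ J, componentSeries J (shiftedTerm D t s β) ∈ cuspSubring (RF k l) := by
  have hC := C_mem_cuspSubring (zv t : RF k l)⁻¹
  have corrections :=
    add_mem (mul_mem hC (sum_componentSeries_mem_cuspSubring hJ delta fun s _ hs =>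
        componentSeries_partialDeriv_mem_cuspSubring hD hβ hs))
      (mul_mem (pow_mem hC 3) (sum_componentSeries_mem_cuspSubring hJ star fun s _ hs =>
        componentSeries_sq_mul_partialDeriv_add_mem_cuspSubring hD hβ hs))
  have remainders := sum_mem fun s hs =>
    componentSeries_shiftedTerm_sub_mem_cuspSubring hD htJ hβ (s := s) hs
  rw [Finset.sum_sub_distrib, Finset.sum_add_distrib, ← Finset.mul_sum, ← Finset.mul_sum]
    at remainders
  simpa only [sub_add_cancel] using add_mem remainders corrections

end NotMem

lemma componentSeries_sum_shiftedTerm_mem_cuspSubring (ht : t ∉ S) (dep : dependsOnlyOn S β)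
    (delta : ∑ s ∈ S, D s β = 0) (star : ∑ s ∈ S, (zv s ^ 2 * D s β + 4 * zv s * β) = 0)
    (hβ : ∀ J ⊆ S, componentSeries J β ∈ cuspSubring (RF k l)) (hJ : J ⊆ insert t S) :
    componentSeries J (∑ s ∈ S, shiftedTerm D t s β) ∈ cuspSubring (RF k l) := by
  rw [map_sum]
  by_cases htJ : t ∈ J
  · have hJ' : J.erase t ⊆ S := Finset.subset_insert_iff.mp hJ
    exact sum_mem fun s hs =>
      componentSeries_shiftedTerm_mem_cuspSubring_of_mem hD ht hs dep htJ (hβ _ hJ')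
  · have hJ' : J ⊆ S := (Finset.subset_insert_iff_of_notMem htJ).mp hJ
    rw [← Finset.sum_sdiff hJ']
    exact add_mem
      (sum_mem fun s hs => componentSeries_shiftedTerm_mem_cuspSubring_of_notMem hD htJ (hβ J hJ')
        (Finset.mem_sdiff.mp hs).2)
      (sum_componentSeries_shiftedTerm_mem_cuspSubring hD htJ (hβ J hJ') hJ' delta star)

end Components

section Admissible

variable {k : Type} [Field k] [CharZero k] {l : ℕ} {S : Finset (Fin l)}
  {D : Fin l → Derivation k (RF k l) (RF k l)} {β : RF k l}

lemma Admissible.Delta_eq_zero (hD : IsPartialDeriv D) (hβ : Admissible D S β) :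
    Delta D β = 0 := by
  obtain ⟨phi, dep, star, homogeneous, -⟩ := hβ
  rw [sum_sq_mul_partialDeriv_add_eq_DeltaStar hD dep] at star
  refine Delta_eq_zero_of_DeltaStar_eq_zero hD phi star (homogeneous.euler hD dep) ?_
  rw [Finset.sum_ite_mem, Finset.univ_inter, Finset.sum_const, nsmul_eq_mul]
  ring

end Admissible

theorem statement16_general {k : Type} [Field k] [CharZero k] {l : ℕ}
    {D : Fin l → Derivation k (RF k l) (RF k l)} (hD : IsPartialDeriv D) {S : Finset (Fin l)}
    {t : Fin l} (ht : t ∉ S) {β : RF k l} (hβ : Admissible D S β) :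
    Admissible D (insert t S) (shiftT S t ht (curlyE D S β)) := by
  have delta := hβ.Delta_eq_zero hD
  obtain ⟨phi, dep, star, homogeneous, components⟩ := hβ
  rw [shiftT_curlyE hD ht phi dep delta]
  refine ⟨?mem_Phi, dependsOnlyOn_sum_shiftedTerm hD dep,
    regular_sum_shiftedTerm hD ht dep star delta, ?homogeneous, fun J hJ => ?components⟩
  case mem_Phi =>
    refine mem_phiSubalgebra_iff_mem_Phi.mp (sum_mem fun s hs => ?_)
    exact mem_phiSubalgebra_iff_mem_Phi.mpr
      (shiftedTerm_mem_Phi hD (ne_of_mem_of_not_mem hs ht).symm phi)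
  case homogeneous =>
    convert IsHomogeneousOn.sum fun s hs =>
      isHomogeneousOn_shiftedTerm hD hs homogeneous dep using 1
    rw [Finset.card_insert_of_notMem ht]
    push_cast
    ring
  case components =>
    refine componentSeries_mem_cuspSubring.mp ?_
    exact componentSeries_sum_shiftedTerm_mem_cuspSubring hD ht dep
      ((sum_partialDeriv_eq_Delta hD dep).trans delta) star
      (fun J hJ => componentSeries_mem_cuspSubring.mpr (components J hJ)) hJ

/-- if `β ∈ R^{l-1}` is an admissible function of `z₁,…,z_{l-1}`
(`z_l` corresponding to the index `ll`), then `Tℰβ` is an admissible function in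
`R^l`, i.e. an admissible function of all `l` variables. -/
theorem statement16 {k : Type} [Field k] [CharZero k] {l : ℕ} (hl : 3 ≤ l)
    (D : Fin l → Derivation k (RF k l) (RF k l)) (hD : IsPartialDeriv D)
    (ll : Fin l) (hll : (ll : ℕ) = l - 1)
    (β : RF k l) (hβ : Admissible D ({ll}ᶜ : Finset (Fin l)) β) :
    Admissible D Finset.univ
      (shiftT ({ll}ᶜ : Finset (Fin l)) ll (by simp) (curlyE D ({ll}ᶜ) β)) := by
  rw [← Finset.insert_compl_self ll]
  exact statement16_general hD _ hβ

end Griess
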